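/- Let p_{d+k,d} denote the number of minimal permutations with d descents of length d+k (1 ≤ k ≤ d). Then p_{d+k,d} = Σ (d+k)! · det(A(a_1,...,a_k)), where the sum is over all k-tuples (a_1,...,a_k) of integers with each a_i ≥ 2 and a_1 + ... + a_k = d+k, and A(a_1,...,a_k) is the k×k matrix with entries: a_{i,j} = 1/(a_i + a_{i+1} + ... + a_j + i − j)! when i ≤ j; a_{i,i-1} = 1; a_{i,i-2} = 1 if a_{i-1} = 2 and 0 otherwise; a_{i,j} = 0 when i > j+2. -/

import Mathlib

/-- The number of descents of a word (list of naturals), i.e. the number of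
positions `i` (0-indexed) with `l[i] > l[i+1]`. -/
def descents (l : List ℕ) : ℕ :=
  ((List.range (l.length - 1)).filter (fun i => l.getD (i + 1) 0 < l.getD i 0)).length

/-- `l` is a minimal permutation (word) with `d` descents: it has exactly `d`
descents and deleting any one entry yields a word with `d - 1` descents. -/
def IsMinimal (d : ℕ) (l : List ℕ) : Prop :=
  descents l = d ∧ ∀ i < l.length, descents (l.eraseIdx i) = d - 1

/-- The matrix `A(a_1, ..., a_k)`: entry `(i,j)` is
`1/(a_i + ... + a_j + i - j)!` for `i ≤ j`, is `1` for `i = j + 1`, is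
`χ_{a_{i-1} = 2}` for `i = j + 2`, and is `0` for `i > j + 2` (0-indexed here). -/
def Amat {k : ℕ} (a : Fin k → ℕ) : Matrix (Fin k) (Fin k) ℚ :=
  Matrix.of fun i j =>
    if (i : ℕ) ≤ (j : ℕ) then
      (1 : ℚ) / (Nat.factorial ((∑ m ∈ Finset.Icc i j, a m) + (i : ℕ) - (j : ℕ)) : ℚ)
    else if (i : ℕ) = (j : ℕ) + 1 then 1
    else if (i : ℕ) = (j : ℕ) + 2 then
      (if a ⟨(i : ℕ) - 1, lt_of_le_of_lt (Nat.sub_le _ _) i.isLt⟩ = 2 then 1 else 0)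
    else 0

/-- reciprocal factorial on integers -/
def gfac (x : ℤ) : ℚ := if 0 ≤ x then 1 / (x.toNat.factorial : ℚ) else 0

lemma gfac_neg {x : ℤ} (h : x < 0) : gfac x = 0 := by
  simp [gfac, not_le.mpr h]

lemma gfac_rec (x : ℤ) : (x : ℚ) * gfac x = gfac (x - 1) := by
  rcases lt_trichotomy x 0 with h | h | h
  · rw [gfac_neg h, gfac_neg (by omega)]; simp
  · subst h; simp [gfac]
  · obtain ⟨n, rfl⟩ : ∃ n : ℕ, x = n + 1 := ⟨(x - 1).toNat, by omega⟩
    have h1 : ((n : ℤ) + 1).toNat = n + 1 := by omega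
    have h2 : ((n : ℤ) + 1 - 1).toNat = n := by omega
    rw [gfac, gfac, if_pos (by omega), if_pos (by omega), h1, h2, Nat.factorial_succ]
    have : (n.factorial : ℚ) ≠ 0 := by positivity
    push_cast
    field_simp

def Dm {k : ℕ} (l m : Fin k → ℤ) : ℚ :=
  (Matrix.of fun i j : Fin k => gfac (l i - i - (m j - j))).det

lemma Dm_rec {k : ℕ} (l m : Fin k → ℤ) :
    ((∑ i, (l i - m i) : ℤ) : ℚ) * Dm l m =
      ∑ c, Dm (Function.update l c (l c - 1)) m := by
  simp only [Dm, Matrix.det_apply', Matrix.of_apply]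
  rw [Finset.sum_comm, Finset.mul_sum]
  refine Finset.sum_congr rfl fun σ _ => ?_
  rw [← Finset.mul_sum, mul_left_comm]
  congr 1
  have h1 : (∑ i, (l i - m i) : ℤ) = ∑ i, (l (σ i) - (σ i : ℕ) - (m i - (i : ℕ))) := by
    simp only [Finset.sum_sub_distrib]
    rw [Equiv.sum_comp σ l, Equiv.sum_comp σ (fun i => ((i : ℕ) : ℤ))]
    ring
  rw [h1, ← Equiv.sum_comp σ (fun c => ∏ i, _)]
  push_cast
  rw [Finset.sum_mul]
  refine Finset.sum_congr rfl fun c _ => ?_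
  rw [← Finset.mul_prod_erase _ _ (Finset.mem_univ c), ← Finset.mul_prod_erase _ _ (Finset.mem_univ c),
    ← mul_assoc]
  congr 1
  · have := gfac_rec (l (σ c) - (σ c : ℕ) - (m c - (c : ℕ)))
    push_cast at this
    rw [this]
    congr 1
    simp; ring
  · refine Finset.prod_congr rfl fun i hi => ?_
    have : σ i ≠ σ c := fun h => (Finset.ne_of_mem_erase hi) (σ.injective h)
    rw [Function.update_of_ne this]

lemma Dm_base {k : ℕ} (m : Fin k → ℤ) (hm : Antitone m) : Dm m m = 1 := by
  rw [Dm, Matrix.det_of_isUpperTriangular]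
  · simp [gfac]
  · intro i j h
    have h' : j < i := h
    have := hm h'.le
    simp only [Matrix.of_apply]
    apply gfac_neg
    have : (j : ℕ) < i := h'
    omega

lemma Dm_eq_rows {k : ℕ} (l m : Fin k → ℤ) (i j : Fin k) (hij : i ≠ j)
    (h : l i - i = l j - j) : Dm l m = 0 := by
  rw [Dm]
  apply Matrix.det_zero_of_row_eq hij
  ext x
  simp [h]

lemma Dm_block {k : ℕ} (l m : Fin k → ℤ) (c : Fin k)
    (h : ∀ i j, c ≤ i → j ≤ c → l i - i < m j - j) : Dm l m = 0 := by
  rw [Dm, Matrix.det_apply]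
  refine Finset.sum_eq_zero fun σ _ => ?_
  have : ∃ j, j ≤ c ∧ c ≤ σ j := by
    by_contra! hcon
    have := Finset.card_le_card_of_injOn σ (s := Finset.Iic c) (t := Finset.Iio c)
      (by intro x hx; simpa using hcon x (by simpa using hx)) (σ.injective.injOn)
    simp at this
  obtain ⟨j, hj, hcj⟩ := this
  rw [Finset.prod_eq_zero (Finset.mem_univ j), smul_zero]
  have := h _ _ hcj hj
  exact gfac_neg (by simp; omega)

structure PF {k : ℕ} (n : ℕ) (l m : Fin k → ℤ) (A : Fin k → List ℕ) : Prop where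
  len : ∀ c, ((A c).length : ℤ) = l c - m c
  sorted : ∀ c, (A c).Pairwise (· < ·)
  ms : ∑ c, (A c : Multiset ℕ) = Multiset.range n
  row : ∀ c c' : Fin k, (c' : ℕ) = c + 1 → ∀ (t t' x y : ℕ), m c + t = m c' + t' →
    (A c)[t]? = some x → (A c')[t']? = some y → x < y

lemma PF.mem_lt {k n : ℕ} {l m : Fin k → ℤ} {A : Fin k → List ℕ} (h : PF n l m A)
    {c : Fin k} {x : ℕ} (hx : x ∈ A c) : x < n := by
  have : x ∈ ∑ c, (A c : Multiset ℕ) := by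
    rw [Multiset.mem_sum]; exact ⟨c, Finset.mem_univ _, by simpa using hx⟩
  rw [h.ms] at this
  simpa using this

def VC {k : ℕ} (l m : Fin k → ℤ) (c : Fin k) : Prop :=
  m c < l c ∧ ∀ c' : Fin k, (c' : ℕ) = c + 1 → l c' < l c

lemma VC.anti {k : ℕ} {l m : Fin k → ℤ} {c : Fin k} (h : VC l m c) (hl : Antitone l) :
    Antitone (Function.update l c (l c - 1)) := by
  intro i j hij
  rcases eq_or_ne i c with rfl | hi
  · rcases eq_or_ne j i with rfl | hj
    · simp
    · rw [Function.update_self, Function.update_of_ne hj]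
      have hlt : (i : ℕ) < j := by
        have := lt_of_le_of_ne hij (Ne.symm hj); exact this
      have h1 := h.2 ⟨i + 1, by omega⟩ rfl
      have h2 : l j ≤ l ⟨i + 1, by omega⟩ := hl (by rw [Fin.le_def]; simp; omega)
      omega
  · rw [Function.update_of_ne hi]
    rcases eq_or_ne j c with rfl | hj
    · rw [Function.update_self]; have := hl hij; omega
    · rw [Function.update_of_ne hj]; exact hl hij

lemma Dm_invalid {k : ℕ} {l m : Fin k → ℤ} {c : Fin k} (h : ¬ VC l m c) (hl : Antitone l)
    (hm : Antitone m) (hml : ∀ c, m c ≤ l c) : Dm (Function.update l c (l c - 1)) m = 0 := by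
  by_cases h1 : m c < l c
  · have : ∃ c' : Fin k, (c' : ℕ) = c + 1 ∧ l c ≤ l c' := by
      by_contra! hc; exact h ⟨h1, hc⟩
    obtain ⟨c', e, hc⟩ := this
    have hne : c ≠ c' := by rintro rfl; omega
    apply Dm_eq_rows _ _ c c' hne
    rw [Function.update_self, Function.update_of_ne hne.symm]
    have : l c' ≤ l c := hl (by rw [Fin.le_def]; omega)
    rw [e]; push_cast; omega
  · apply Dm_block _ _ c
    intro i j hi hj
    have a1 : (c : ℕ) ≤ i := hi
    have a2 : (j : ℕ) ≤ c := hj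
    have a3 := hl hi
    have a4 := hm hj
    rcases eq_or_ne i c with rfl | hne
    · rw [Function.update_self]; omega
    · rw [Function.update_of_ne hne]
      have : (i : ℕ) ≠ c := fun e => hne (Fin.ext e)
      omega

def ins {k : ℕ} (n : ℕ) (p : (_ : Fin k) × (Fin k → List ℕ)) : Fin k → List ℕ :=
  Function.update p.2 p.1 (p.2 p.1 ++ [n])

lemma sum_ins {k n : ℕ} (c : Fin k) (A : Fin k → List ℕ) :
    ∑ i, (ins n ⟨c, A⟩ i : Multiset ℕ) = n ::ₘ ∑ i, (A i : Multiset ℕ) := by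
  rw [← Finset.add_sum_erase _ _ (Finset.mem_univ c),
    ← Finset.add_sum_erase (a := c) (f := fun i => (A i : Multiset ℕ)) _ (Finset.mem_univ c)]
  have : ∀ i ∈ Finset.univ.erase c, (ins n ⟨c, A⟩ i : Multiset ℕ) = A i := by
    intro i hi
    simp [ins, Function.update_of_ne (Finset.ne_of_mem_erase hi)]
  rw [Finset.sum_congr rfl this]
  simp only [ins, Function.update_self]
  rw [← Multiset.cons_add]
  congr 1
  rw [← Multiset.coe_add, add_comm]; rfl

lemma PF_ins {k n : ℕ} {l m : Fin k → ℤ} {c : Fin k} {A : Fin k → List ℕ}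
    (hv : VC l m c)
    (h : PF n (Function.update l c (l c - 1)) m A) : PF (n + 1) l m (ins n ⟨c, A⟩) := by
  refine ⟨?_, ?_, ?_, ?_⟩
  · intro i
    have := h.len i
    rcases eq_or_ne i c with rfl | hi
    · simp [ins] at this ⊢; omega
    · simpa [ins, hi] using this
  · intro i
    have := h.sorted i
    rcases eq_or_ne i c with rfl | hi
    · simp only [ins, Function.update_self]
      rw [List.pairwise_append]
      refine ⟨this, by simp, fun x hx y hy => ?_⟩
      have := h.mem_lt hx
      simp at hy; omega
    · simpa [ins, hi] using this
  · rw [sum_ins, h.ms, Multiset.range_succ]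
  · intro i i' hi t t' x y htt hx hy
    have hne : i ≠ i' := by rintro rfl; omega
    rcases eq_or_ne i c with rfl | h1
    · simp only [ins, Function.update_self, Function.update_of_ne hne.symm] at hx hy
      have l1 := h.len i
      have l2 := h.len i'
      rw [Function.update_self] at l1
      rw [Function.update_of_ne hne.symm] at l2
      have := hv.2 i' hi
      have ht' : t' < (A i').length := by
        by_contra hc
        rw [List.getElem?_eq_none (by omega)] at hy; simp at hy
      rw [List.getElem?_append_left (by omega)] at hx
      exact h.row i i' hi t t' x y htt hx hy
    · rcases eq_or_ne i' c with rfl | h2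
      · simp only [ins, Function.update_self, Function.update_of_ne hne] at hx hy
        rcases lt_or_ge t' (A i').length with hlt | hge
        · rw [List.getElem?_append_left hlt] at hy
          exact h.row i i' hi t t' x y htt hx hy
        · rw [List.getElem?_append_right hge] at hy
          have hy' := List.mem_of_getElem? hy
          simp at hy'
          subst hy'
          exact h.mem_lt (List.mem_of_getElem? hx)
      · simp only [ins, Function.update_of_ne h1, Function.update_of_ne h2] at hx hy
        exact h.row i i' hi t t' x y htt hx hy

lemma PF_exists {k n : ℕ} {l m : Fin k → ℤ} {A : Fin k → List ℕ} (hm : Antitone m)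
    (h : PF (n + 1) l m A) (hl : Antitone l) :
    ∃ c A', VC l m c ∧ PF n (Function.update l c (l c - 1)) m A' ∧ ins n ⟨c, A'⟩ = A := by
  have hn : n ∈ ∑ c, (A c : Multiset ℕ) := by rw [h.ms]; simp
  rw [Multiset.mem_sum] at hn
  obtain ⟨c, -, hc⟩ := hn
  have hc : n ∈ A c := by simpa using hc
  have hne : A c ≠ [] := List.ne_nil_of_mem hc
  -- last element is n
  have hlast : A c = (A c).dropLast ++ [n] := by
    have e := List.dropLast_append_getLast hne
    have hs := h.sorted c
    rw [← e, List.pairwise_append] at hs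
    rw [← e] at hc
    rcases List.mem_append.1 hc with h1 | h1
    · have h2 := hs.2.2 n h1 _ (List.mem_singleton_self _)
      have h3 := h.mem_lt (List.getLast_mem hne)
      omega
    · simp at h1
      conv_lhs => rw [← e]
      rw [← h1]
  set B := (A c).dropLast with hB
  have hins : ins n ⟨c, Function.update A c B⟩ = A := by
    simp [ins, ← hlast]
  have lenc : (A c).length = B.length + 1 := by rw [hlast]; simp
  have l1 := h.len c
  have topn : (A c)[B.length]? = some n := by rw [hlast]; simp
  have hv : VC l m c := by
    refine ⟨by omega, fun c' e => ?_⟩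
    by_contra hcon
    have hle := hl (show c ≤ c' by rw [Fin.le_def]; omega)
    have hmle := hm (show c ≤ c' by rw [Fin.le_def]; omega)
    have l2 := h.len c'
    obtain ⟨t', ht'⟩ : ∃ t' : ℕ, m c + B.length = m c' + t' :=
      ⟨(m c + B.length - m c').toNat, by omega⟩
    have hlt : t' < (A c').length := by omega
    have h5 := h.row c c' e B.length t' n _ ht' topn (List.getElem?_eq_getElem hlt)
    have h6 := h.mem_lt (List.getElem_mem hlt)
    omega
  refine ⟨c, Function.update A c B, hv, ⟨?_, ?_, ?_, ?_⟩, hins⟩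
  · intro i
    rcases eq_or_ne i c with rfl | hi
    · simp only [Function.update_self]; omega
    · simpa [hi] using h.len i
  · intro i
    rcases eq_or_ne i c with rfl | hi
    · simp only [Function.update_self]
      exact (h.sorted i).sublist (List.dropLast_sublist _)
    · simpa [hi] using h.sorted i
  · have := h.ms
    rw [← hins, sum_ins, Multiset.range_succ] at this
    exact (Multiset.cons_inj_right n).1 this
  · intro i i' e t t' x y htt hx hy
    have key : ∀ j (s z : ℕ), (Function.update A c B j)[s]? = some z → (A j)[s]? = some z := by
      intro j s z hz
      rcases eq_or_ne j c with rfl | hj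
      · simp only [Function.update_self] at hz
        have : s < B.length := by
          by_contra hc
          rw [List.getElem?_eq_none (by omega)] at hz; simp at hz
        rw [hlast, List.getElem?_append_left this]; exact hz
      · simpa [hj] using hz
    exact h.row i i' e t t' x y htt (key _ _ _ hx) (key _ _ _ hy)

theorem PF_count {k : ℕ} (m : Fin k → ℤ) (hm : Antitone m) (n : ℕ) : ∀ l : Fin k → ℤ,
    Antitone l → (∀ c, m c ≤ l c) → ∑ c, (l c - m c) = n →
    ∃ S : Finset (Fin k → List ℕ), (∀ A, A ∈ S ↔ PF n l m A) ∧
      (S.card : ℚ) = n.factorial * Dm l m := by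
  classical
  induction n with
  | zero =>
    intro l hl hml hs
    have hlm : l = m := by
      funext c
      have := (Finset.sum_eq_zero_iff_of_nonneg (fun i _ => by have := hml i; omega)).1 hs c
        (Finset.mem_univ c)
      omega
    subst hlm
    refine ⟨{fun _ => []}, fun A => ?_, by simp [Dm_base _ hm]⟩
    rw [Finset.mem_singleton]
    constructor
    · rintro rfl
      refine ⟨by simp, by simp, by simp, by simp⟩
    · intro h
      funext c
      have := h.len c
      rw [sub_self] at this
      exact List.length_eq_zero_iff.1 (by exact_mod_cast this)
  | succ n ih =>
    intro l hl hml hs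
    have hex : ∀ c, ∃ S : Finset (Fin k → List ℕ), VC l m c →
        (∀ A, A ∈ S ↔ PF n (Function.update l c (l c - 1)) m A) ∧
        (S.card : ℚ) = n.factorial * Dm (Function.update l c (l c - 1)) m := by
      intro c
      by_cases hv : VC l m c
      · obtain ⟨S, hS⟩ := ih _ (hv.anti hl) (by
          intro i
          rcases eq_or_ne i c with rfl | hi
          · simp; have := hv.1; omega
          · simp [hi, hml]) (by
          have : ∀ i, Function.update l c (l c - 1) i - m i = (l i - m i) - if i = c then 1 else 0 := by
            intro i
            rcases eq_or_ne i c with rfl | hi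
            · simp; ring
            · simp [hi]
          simp only [this]
          rw [Finset.sum_sub_distrib, hs]
          simp)
        exact ⟨S, fun _ => hS⟩
      · exact ⟨∅, fun h => absurd h hv⟩
    choose S hS using hex
    let V : Finset (Fin k) := Finset.univ.filter (VC l m)
    have hV : ∀ c, c ∈ V ↔ VC l m c := by simp [V]
    refine ⟨(V.sigma S).image (ins n), ?_, ?_⟩
    · intro A
      rw [Finset.mem_image]
      constructor
      · rintro ⟨⟨c, A'⟩, hp, rfl⟩
        rw [Finset.mem_sigma] at hp
        have hv := (hV c).1 hp.1
        exact PF_ins hv (((hS c hv).1 A').1 hp.2)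
      · intro h
        obtain ⟨c, A', hv, hP, e⟩ := PF_exists hm h hl
        exact ⟨⟨c, A'⟩, Finset.mem_sigma.2 ⟨(hV c).2 hv, ((hS c hv).1 A').2 hP⟩, e⟩
    · rw [Finset.card_image_of_injOn]
      · rw [Finset.card_sigma]
        push_cast
        have h1 : ∑ c ∈ V, ((S c).card : ℚ) =
            ∑ c ∈ V, n.factorial * Dm (Function.update l c (l c - 1)) m :=
          Finset.sum_congr rfl fun c hc => (hS c ((hV c).1 hc)).2
        rw [h1, ← Finset.mul_sum]
        have h2 : ∑ c ∈ V, Dm (Function.update l c (l c - 1)) m =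
            ∑ c, Dm (Function.update l c (l c - 1)) m :=
          Finset.sum_subset (Finset.subset_univ _) fun c _ hc =>
            Dm_invalid (fun h => hc ((hV c).2 h)) hl hm hml
        rw [h2, ← Dm_rec, hs, Nat.factorial_succ]
        push_cast; ring
      · rintro ⟨c, A⟩ hp ⟨c', A'⟩ hp' e
        rw [Finset.mem_coe, Finset.mem_sigma] at hp hp'
        have hv := (hV c).1 hp.1
        have hv' := (hV c').1 hp'.1
        have hA := ((hS c hv).1 A).1 hp.2
        have hA' := ((hS c' hv').1 A').1 hp'.2
        have hcc : c = c' := by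
          by_contra hne
          have := congrFun e c
          simp only [ins, Function.update_self, Function.update_of_ne hne] at this
          have h3 : n ∈ A' c := by rw [← this]; simp
          exact absurd (hA'.mem_lt h3) (lt_irrefl _)
        subst hcc
        congr 1
        funext i
        have := congrFun e i
        rcases eq_or_ne i c with rfl | hi
        · simpa [ins] using this
        · simpa [ins, hi] using this

lemma descents_nil : descents [] = 0 := rfl
lemma descents_one (x : ℕ) : descents [x] = 0 := rfl
lemma descents_cons (a b : ℕ) (l : List ℕ) :
    descents (a :: b :: l) = (if b < a then 1 else 0) + descents (b :: l) := by
  simp only [descents, List.length_cons, Nat.add_sub_cancel]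
  rw [List.range_succ_eq_map, List.filter_cons, List.filter_map, ]
  simp only [List.getD_cons_zero, List.getD_cons_succ, zero_add]
  split_ifs with h1 h2 h2
  · simp [Function.comp_def]; omega
  · simp at h1; omega
  · simp at h1; omega
  · simp [Function.comp_def]

def Cnd (y x z : ℕ) : Prop := (x < y ∧ z < x) ∨ (y < z ∧ (x < y ∨ z < x))

def Tri : List ℕ → Prop
  | y :: x :: z :: t => Cnd y x z ∧ Tri (x :: z :: t)
  | [y, x] => x < y
  | _ => True

lemma Tri_iff (l : List ℕ) (hn : l.Nodup) :
    Tri l ↔ ∀ i, 1 ≤ i → i < l.length → descents (l.eraseIdx i) + 1 = descents l := by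
  induction l with
  | nil => simp [Tri]
  | cons y l ih =>
    match l, hn, ih with
    | [], _, _ => simp [Tri]; intros; omega
    | [x], hn, _ =>
      simp only [Tri]
      constructor
      · intro h i h1 h2
        have : i = 1 := by simp at h2; omega
        subst this
        simp [descents_cons, descents_one, h]
      · intro h
        have := h 1 le_rfl (by simp)
        simp [descents_cons, descents_one] at this
        exact this
    | x :: z :: t, hn, ih =>
      have hn' := (List.nodup_cons.1 hn).2
      have d1 : y ≠ x := by rintro rfl; simp at hn
      have d2 : y ≠ z := by rintro rfl; simp at hn
      have d3 : x ≠ z := by rintro rfl; simp at hn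
      simp only [Tri]
      rw [ih hn']
      constructor
      · rintro ⟨hc, h⟩ i h1 h2
        match i, h1, h2 with
        | 1, _, _ =>
          simp only [List.eraseIdx_cons_succ, List.eraseIdx_cons_zero, descents_cons]
          unfold Cnd at hc
          split_ifs <;> omega
        | j + 2, _, h2 =>
          have := h (j + 1) (by omega) (by simp at h2 ⊢; omega)
          simp only [List.eraseIdx_cons_succ] at this ⊢
          rw [descents_cons, descents_cons y x (z :: t)]
          omega
      · intro h
        constructor
        · have := h 1 le_rfl (by simp)
          simp only [List.eraseIdx_cons_succ, List.eraseIdx_cons_zero, descents_cons] at this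
          unfold Cnd
          split_ifs at this <;> omega
        · intro i h1 h2
          obtain ⟨j, rfl⟩ : ∃ j, i = j + 1 := ⟨i - 1, by omega⟩
          have := h (j + 2) (by omega) (by simp at h2 ⊢; omega)
          simp only [List.eraseIdx_cons_succ] at this ⊢
          rw [descents_cons, descents_cons y x (z :: t)] at this
          omega

lemma isMinimal_iff (d : ℕ) (hd : 1 ≤ d) (l : List ℕ) (hn : l.Nodup) :
    IsMinimal d l ↔ descents l = d ∧ Tri l ∧ ∃ y x t, l = y :: x :: t ∧ x < y := by
  unfold IsMinimal
  refine and_congr_right fun hdl => ?_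
  rw [Tri_iff l hn]
  match l, hdl with
  | [], h => rw [descents_nil] at h; omega
  | [x], h => rw [descents_one] at h; omega
  | y :: x :: t, hdl =>
    constructor
    · intro h
      refine ⟨fun i h1 h2 => by have := h i h2; omega, y, x, t, rfl, ?_⟩
      have := h 0 (by simp)
      rw [List.eraseIdx_cons_zero] at this
      rw [descents_cons] at hdl
      split_ifs at hdl <;> omega
    · rintro ⟨h, y', x', t', e, hlt⟩ i hi
      simp only [List.cons.injEq] at e
      obtain ⟨rfl, rfl, rfl⟩ := e
      rcases Nat.eq_zero_or_pos i with rfl | hpos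
      · rw [List.eraseIdx_cons_zero]
        rw [descents_cons, if_pos hlt] at hdl
        omega
      · have := h i hpos hi
        omega

def RR (c c' : List ℕ) : Prop :=
  ∃ u p q r s v, c = u ++ [p, q] ∧ c' = r :: s :: v ∧ p < r ∧ q < s

def GoodCs (cs : List (List ℕ)) : Prop :=
  (∀ c ∈ cs, 2 ≤ c.length ∧ c.IsChain (· > ·)) ∧ cs.IsChain RR

lemma RR_cons {y : ℕ} {c c' : List ℕ} (h : RR c c') : RR (y :: c) c' := by
  obtain ⟨u, p, q, r, s, v, rfl, rfl, h1, h2⟩ := h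
  exact ⟨y :: u, p, q, r, s, v, rfl, rfl, h1, h2⟩

lemma RR_tail {y x z : ℕ} {c c' : List ℕ} (h : RR (y :: x :: z :: c) c') :
    RR (x :: z :: c) c' := by
  obtain ⟨u, p, q, r, s, v, e, rfl, h1, h2⟩ := h
  cases u with
  | nil => simp at e
  | cons a u =>
    simp only [List.cons_append, List.cons.injEq] at e
    exact ⟨u, p, q, r, s, v, e.2, rfl, h1, h2⟩

lemma exists_cs (n : ℕ) : ∀ (y x : ℕ) (t : List ℕ), t.length ≤ n → x < y → Tri (y :: x :: t) →
    ∃ c cs, GoodCs ((y :: x :: c) :: cs) ∧ ((y :: x :: c) :: cs).flatten = y :: x :: t := by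
  induction n with
  | zero =>
    intro y x t ht hlt _
    have : t = [] := List.length_eq_zero_iff.1 (by omega)
    subst this
    exact ⟨[], [], ⟨by simp [hlt], by simp⟩, by simp⟩
  | succ n ih =>
    intro y x t ht hlt hT
    match t, ht, hT with
    | [], _, _ => exact ⟨[], [], ⟨by simp [hlt], by simp⟩, by simp⟩
    | z :: t, ht, hT =>
      simp only [Tri] at hT
      obtain ⟨hc, hT⟩ := hT
      by_cases hzx : z < x
      · obtain ⟨c, cs, hg, hf⟩ := ih x z t (by simp at ht; omega) hzx hT
        refine ⟨z :: c, cs, ⟨?_, ?_⟩, ?_⟩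
        · intro c1 h1
          rcases List.mem_cons.1 h1 with rfl | h1
          · have := hg.1 _ List.mem_cons_self
            refine ⟨by simp, ?_⟩
            exact List.IsChain.cons_cons hlt this.2
          · exact hg.1 _ (List.mem_cons_of_mem _ h1)
        · have := hg.2
          cases cs with
          | nil => simp
          | cons c2 cs =>
            rw [List.isChain_cons_cons] at this ⊢
            exact ⟨RR_cons this.1, this.2⟩
        · simp at hf ⊢; exact hf
      · have h2 : y < z := by unfold Cnd at hc; omega
        match t, ht, hT with
        | [], _, hT => simp only [Tri] at hT; omega
        | s :: t, ht, hT =>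
          simp only [Tri] at hT
          obtain ⟨hc', hT⟩ := hT
          have h3 : s < z ∧ x < s := by unfold Cnd at hc'; omega
          obtain ⟨c, cs, hg, hf⟩ := ih z s t (by simp at ht; omega) h3.1 hT
          refine ⟨[], (z :: s :: c) :: cs, ⟨?_, ?_⟩, ?_⟩
          · intro c1 h1
            rcases List.mem_cons.1 h1 with rfl | h1
            · simp [hlt]
            · exact hg.1 _ h1
          · rw [List.isChain_cons_cons]
            exact ⟨⟨[], y, x, z, s, c, rfl, rfl, h2, h3.2⟩, hg.2⟩
          · rw [List.flatten_cons, hf]; simp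

lemma GoodCs.spec (cs : List (List ℕ)) : ∀ c, GoodCs (c :: cs) →
    Tri (c :: cs).flatten ∧ (∃ y x t, (c :: cs).flatten = y :: x :: t ∧ x < y) ∧
    descents (c :: cs).flatten + (c :: cs).length = (c :: cs).flatten.length := by
  induction cs with
  | nil =>
    intro c
    induction c with
    | nil => intro h; have := (h.1 _ List.mem_cons_self).1; simp at this
    | cons y c ih =>
      match c, ih with
      | [], ih => intro h; have := (h.1 _ List.mem_cons_self).1; simp at this
      | [x], ih =>
        intro h
        have := (h.1 _ List.mem_cons_self).2
        simp at this
        simp [Tri, this, descents_cons, descents_one]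
      | x :: z :: t, ih =>
        intro h
        have h1 := (h.1 _ List.mem_cons_self).2
        rw [List.isChain_cons_cons] at h1
        have h2 := h1.2
        rw [List.isChain_cons_cons] at h2
        obtain ⟨e1, -, e3⟩ := ih ⟨by simpa using h1.2, by simp⟩
        simp only [List.flatten_cons, List.flatten_nil, List.append_nil] at e1 e3 ⊢
        refine ⟨⟨Or.inl ⟨h1.1, h2.1⟩, e1⟩, ⟨_, _, _, rfl, h1.1⟩, ?_⟩
        rw [descents_cons, if_pos h1.1]
        simp only [List.length_cons, List.length_nil] at e3 ⊢
        omega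
  | cons c' cs IH =>
    intro c
    induction c with
    | nil => intro h; have := (h.1 _ List.mem_cons_self).1; simp at this
    | cons y c ih =>
      match c, ih with
      | [], ih => intro h; have := (h.1 _ List.mem_cons_self).1; simp at this
      | [x], ih =>
        intro h
        have hxy := (h.1 _ List.mem_cons_self).2
        simp at hxy
        have hR := (List.isChain_cons_cons.1 h.2)
        obtain ⟨e1, ⟨y', x', t', e2, e2'⟩, e3⟩ := IH c' ⟨fun a ha => h.1 a (List.mem_cons_of_mem _ ha), hR.2⟩
        obtain ⟨u, p, q, r, s, v, f1, rfl, f3, f4⟩ := hR.1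
        have : u = [] := by
          have := congrArg List.length f1
          simp at this
          exact this
        subst this
        simp at f1
        obtain ⟨rfl, rfl⟩ := f1
        rw [List.flatten_cons]
        rw [e2] at e1 e3 ⊢
        simp only [List.flatten_cons, List.cons_append, List.cons.injEq] at e2
        obtain ⟨rfl, rfl, -⟩ := e2
        simp only [List.cons_append, List.nil_append, Tri]
        refine ⟨⟨?_, ?_, e1⟩, ⟨_, _, _, rfl, hxy⟩, ?_⟩
        · unfold Cnd; omega
        · unfold Cnd; omega
        · rw [descents_cons, descents_cons, if_pos hxy, if_neg (by omega)]
          simp only [List.length_cons] at e3 ⊢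
          omega
      | x :: z :: t, ih =>
        intro h
        have h1 := (h.1 _ List.mem_cons_self).2
        rw [List.isChain_cons_cons] at h1
        have h2 := h1.2
        rw [List.isChain_cons_cons] at h2
        have hR := (List.isChain_cons_cons.1 h.2)
        obtain ⟨e1, -, e3⟩ := ih ⟨by
          intro a ha
          rcases List.mem_cons.1 ha with rfl | ha
          · exact ⟨by simp, h1.2⟩
          · exact h.1 a (List.mem_cons_of_mem _ ha), by
          rw [List.isChain_cons_cons]
          exact ⟨RR_tail hR.1, hR.2⟩⟩
        rw [List.flatten_cons] at e1 e3 ⊢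
        simp only [List.cons_append] at e1 e3 ⊢
        refine ⟨⟨Or.inl ⟨h1.1, h2.1⟩, e1⟩, ⟨_, _, _, rfl, h1.1⟩, ?_⟩
        rw [descents_cons, if_pos h1.1]
        simp only [List.length_cons] at e3 ⊢
        omega

lemma GoodCs.inj {cs cs' : List (List ℕ)} (h : GoodCs cs) (h' : GoodCs cs')
    (e : cs.flatten = cs'.flatten) : cs = cs' := by
  have key : ∀ cs, GoodCs cs → cs.flatten.splitBy (fun x y => decide (y < x)) = cs := by
    intro cs h
    apply List.splitBy_flatten
    · intro hn; have := (h.1 _ hn).1; simp at this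
    · intro m hm
      simpa using (h.1 m hm).2
    · have h2 := (List.isChain_iff_getElem.1 h.2)
      rw [List.isChain_iff_getElem]
      intro i hi
      have h3 := h.1 _ (List.getElem_mem (show i < cs.length by omega))
      obtain ⟨u, p, q, r, s, v, f1, f2, f3, f4⟩ := h2 i hi
      have h4 := h.1 _ (List.getElem_mem hi)
      rw [f2] at h4
      have h5 := h4.2
      rw [List.isChain_cons_cons] at h5
      refine ⟨by rw [f1]; simp, by rw [f2]; simp, ?_⟩
      simp only [f1, f2]
      simp
      have := h5.1
      omega
  rw [← key cs h, ← key cs' h', e]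

def muOf {k : ℕ} (a : Fin k → ℕ) (i : Fin k) : ℤ := ∑ j ∈ Finset.Ioi i, ((a j : ℤ) - 2)

lemma muOf_split {k : ℕ} (a : Fin k → ℕ) {i j : Fin k} (h : i ≤ j) :
    ((a i : ℤ) - 2) + muOf a i = ∑ t ∈ Finset.Icc i j, ((a t : ℤ) - 2) + muOf a j := by
  have h1 : ((a i : ℤ) - 2) + muOf a i = ∑ t ∈ Finset.Ici i, ((a t : ℤ) - 2) := by
    rw [← Finset.Ioi_insert, Finset.sum_insert (by simp)]; rfl
  rw [h1, muOf, ← Finset.sum_union]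
  · congr 1
    ext x
    simp only [Finset.mem_Ici, Finset.mem_union, Finset.mem_Icc, Finset.mem_Ioi]
    constructor
    · intro hx
      rcases le_or_gt x j with h2 | h2
      · exact Or.inl ⟨hx, h2⟩
      · exact Or.inr h2
    · rintro (⟨h2, _⟩ | h2)
      · exact h2
      · exact h.trans h2.le
  · rw [Finset.disjoint_left]
    intro x hx hx'
    simp at hx hx'
    exact absurd hx.2 (not_le.2 hx')

lemma muOf_succ {k : ℕ} (a : Fin k → ℕ) {i j : Fin k} (h : (j : ℕ) = i + 1) :
    muOf a i = muOf a j + a j - 2 := by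
  have hij : i ≤ j := by rw [Fin.le_def]; omega
  have := muOf_split a hij
  have e : Finset.Icc i j = {i, j} := by
    ext x
    simp only [Finset.mem_Icc, Finset.mem_insert, Finset.mem_singleton, Fin.le_def, Fin.ext_iff]
    omega
  rw [e, Finset.sum_pair (by rintro rfl; omega)] at this
  omega

lemma muOf_lt {k : ℕ} (a : Fin k → ℕ) (ha : ∀ i, 2 ≤ a i) {i j : Fin k} (h : i < j) :
    muOf a j + a j - 2 ≤ muOf a i := by
  have h1 : ((a j : ℤ) - 2) + muOf a j = ∑ t ∈ Finset.Ici j, ((a t : ℤ) - 2) := by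
    rw [← Finset.Ioi_insert, Finset.sum_insert (by simp)]; rfl
  have h2 : ∑ t ∈ Finset.Ici j, ((a t : ℤ) - 2) ≤ muOf a i := by
    apply Finset.sum_le_sum_of_subset_of_nonneg
    · intro x hx
      simp at hx ⊢
      exact lt_of_lt_of_le h hx
    · intro x _ _
      have := ha x
      omega
  omega

lemma muOf_anti {k : ℕ} (a : Fin k → ℕ) (ha : ∀ i, 2 ≤ a i) : Antitone (muOf a) := by
  intro i j h
  rcases h.eq_or_lt with rfl | h
  · exact le_rfl
  · have := muOf_lt a ha h
    have := ha j
    omega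

lemma laOf_anti {k : ℕ} (a : Fin k → ℕ) (ha : ∀ i, 2 ≤ a i) :
    Antitone (fun i => muOf a i + a i) := by
  intro i j h
  rcases h.eq_or_lt with rfl | h
  · exact le_rfl
  · have := muOf_lt a ha h
    have := ha i
    simp only
    omega

lemma Amat_det {k : ℕ} (a : Fin k → ℕ) (ha : ∀ i, 2 ≤ a i) :
    (Amat a).det = Dm (fun i => muOf a i + a i) (muOf a) := by
  rw [Dm]
  congr 1
  ext i j
  simp only [Amat, Matrix.of_apply]
  split_ifs with h1 h2 h3 h4
  · have hs := muOf_split a (show i ≤ j from h1)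
    rw [Finset.sum_sub_distrib, Finset.sum_const, Fin.card_Icc] at hs
    have hge : ∑ t ∈ Finset.Icc i j, 2 ≤ ∑ t ∈ Finset.Icc i j, a t :=
      Finset.sum_le_sum fun t _ => ha t
    rw [Finset.sum_const, Fin.card_Icc] at hge
    simp only [smul_eq_mul, nsmul_eq_mul] at hs hge
    rw [← Nat.cast_sum] at hs
    have e : muOf a i + a i - (i : ℕ) - (muOf a j - (j : ℕ)) =
        (((∑ t ∈ Finset.Icc i j, a t) + i - j : ℕ) : ℤ) := by
      generalize (∑ t ∈ Finset.Icc i j, a t) = s at *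
      omega
    rw [e, gfac, if_pos (by positivity), Int.toNat_natCast]
  · have := muOf_succ a h2
    have e : muOf a i + a i - (i : ℕ) - (muOf a j - (j : ℕ)) = 1 := by rw [h2]; push_cast; omega
    rw [e]; simp [gfac]
  all_goals
    first
    | have m1 := muOf_succ a (i := ⟨(i : ℕ) - 1, by omega⟩) (j := i) (by simp; omega)
      have m2 := muOf_succ a (i := j) (j := ⟨(i : ℕ) - 1, by omega⟩) (by simp; omega)
      have m3 := ha ⟨(i : ℕ) - 1, by omega⟩
    | skip
  · have e : muOf a i + a i - (i : ℕ) - (muOf a j - (j : ℕ)) = 0 := by omega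
    rw [e]; simp [gfac]
  · rw [gfac_neg]; omega
  · have hlt : j < i := by rw [Fin.lt_def]; omega
    have := muOf_lt a ha hlt
    rw [gfac_neg]; omega

def chunks {k : ℕ} (A : Fin k → List ℕ) : List (List ℕ) := List.ofFn fun i => (A i).reverse

lemma chunks_flatten {k : ℕ} (A : Fin k → List ℕ) :
    ((chunks A).flatten : Multiset ℕ) = ∑ i, (A i : Multiset ℕ) := by
  have h : ∀ L : List (List ℕ), (L.flatten : Multiset ℕ) = (L.map (fun l : List ℕ => (l : Multiset ℕ))).sum := by
    intro L
    induction L with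
    | nil => rfl
    | cons c L ih => rw [List.flatten_cons, ← Multiset.coe_add, ih]; simp
  rw [h, chunks, List.map_ofFn, List.sum_ofFn]
  refine Finset.sum_congr rfl fun i _ => ?_
  simp

lemma chunks_inj {k : ℕ} {A B : Fin k → List ℕ} (h : chunks A = chunks B) : A = B := by
  have := List.ofFn_injective h
  funext i
  exact List.reverse_injective (congrFun this i)

lemma PF_iff {k : ℕ} (n : ℕ) (a : Fin k → ℕ) (ha : ∀ i, 2 ≤ a i) (A : Fin k → List ℕ) :
    PF n (fun i => muOf a i + a i) (muOf a) A ↔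
      (∀ i, (A i).length = a i) ∧ GoodCs (chunks A) ∧ (chunks A).flatten.Perm (List.range n) := by
  have hms : ∑ c, (A c : Multiset ℕ) = Multiset.range n ↔ (chunks A).flatten.Perm (List.range n) := by
    rw [← chunks_flatten, ← Multiset.coe_range, Multiset.coe_eq_coe]
  have hrow : (∀ i, (A i).length = a i) →
      ((∀ c c' : Fin k, (c' : ℕ) = c + 1 → ∀ (t t' x y : ℕ), muOf a c + t = muOf a c' + t' →
        (A c)[t]? = some x → (A c')[t']? = some y → x < y) ↔ (chunks A).IsChain RR) := by
    intro hlen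
    rw [List.isChain_iff_getElem]
    simp only [chunks, List.getElem_ofFn, List.length_ofFn]
    have main : ∀ c c' : Fin k, (c' : ℕ) = c + 1 → ((∀ (t t' x y : ℕ), muOf a c + t = muOf a c' + t' →
        (A c)[t]? = some x → (A c')[t']? = some y → x < y) ↔ RR (A c).reverse (A c').reverse) := by
      intro c c' e
      have hmu := muOf_succ a e
      have l1 := hlen c
      have l2 := hlen c'
      have g1 := ha c
      have g2 := ha c'
      obtain ⟨q, p, w, hAc⟩ : ∃ q p w, A c = q :: p :: w := by
        match hA : A c with
        | [] => rw [hA] at l1; simp at l1; omega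
        | [_] => rw [hA] at l1; simp at l1; omega
        | q :: p :: w => exact ⟨q, p, w, rfl⟩
      obtain ⟨r, s, v, hAc'⟩ : ∃ r s v, (A c').reverse = r :: s :: v := by
        match hA : (A c').reverse with
        | [] => rw [← List.length_reverse, hA] at l2; simp at l2; omega
        | [_] => rw [← List.length_reverse, hA] at l2; simp at l2; omega
        | q :: p :: w => exact ⟨q, p, w, rfl⟩
      have hAc2 : A c' = v.reverse ++ [s, r] := by
        rw [← List.reverse_reverse (A c'), hAc']; simp
      have hv : v.length + 2 = a c' := by rw [← l2, hAc2]; simp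
      constructor
      · intro h
        refine ⟨w.reverse, p, q, r, s, v, by rw [hAc]; simp, hAc', ?_, ?_⟩
        · refine h 1 (v.length + 1) p r (by push_cast; omega) (by rw [hAc]; simp) ?_
          rw [hAc2, List.getElem?_append_right (by simp)]; simp
        · refine h 0 v.length q s (by push_cast; omega) (by rw [hAc]; simp) ?_
          rw [hAc2, List.getElem?_append_right (by simp)]; simp
      · rintro ⟨u', p', q', r', s', v', e1, e2, h1, h2⟩ t t' x y htt hx hy
        rw [hAc'] at e2
        simp only [List.cons.injEq] at e2
        obtain ⟨rfl, rfl, rfl⟩ := e2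
        have e1' : A c = q' :: p' :: u'.reverse := by
          rw [← List.reverse_reverse (A c), e1]; simp
        have ht' : t' < (A c').length := by
          by_contra hc
          rw [List.getElem?_eq_none (by omega)] at hy; simp at hy
        rw [hAc2, List.getElem?_append_right (by simp; omega)] at hy
        have : t = 0 ∨ t = 1 := by omega
        rcases this with rfl | rfl
        · have : t' = v.length := by omega
          subst this
          rw [e1'] at hx
          simp at hx hy
          omega
        · have : t' = v.length + 1 := by omega
          subst this
          rw [e1'] at hx
          simp at hx hy
          omega
    constructor
    · intro h i hi
      exact (main ⟨i, by omega⟩ ⟨i + 1, hi⟩ rfl).1 (h _ _ rfl)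
    · intro h c c' e
      refine (main c c' e).2 ?_
      have := h c (by omega)
      have e2 : c' = ⟨c + 1, by omega⟩ := Fin.ext e
      rw [e2]; exact this
  have hsort : ∀ i, (A i).Pairwise (· < ·) ↔ (A i).reverse.IsChain (· > ·) := by
    intro i
    rw [List.isChain_iff_pairwise, List.pairwise_reverse]
  constructor
  · intro h
    have hlen : ∀ i, (A i).length = a i := fun i => by have := h.len i; omega
    refine ⟨hlen, ⟨?_, (hrow hlen).1 h.row⟩, hms.1 h.ms⟩
    intro c hc
    rw [chunks, List.mem_ofFn] at hc
    obtain ⟨i, rfl⟩ := hc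
    exact ⟨by rw [List.length_reverse, hlen]; exact ha i, (hsort i).1 (h.sorted i)⟩
  · rintro ⟨hlen, hg, hp⟩
    refine ⟨fun i => by rw [hlen]; ring, fun i => (hsort i).2 ?_, hms.2 hp, (hrow hlen).2 hg.2⟩
    exact (hg.1 _ (by rw [chunks, List.mem_ofFn]; exact ⟨i, rfl⟩)).2

theorem card_minimal_eq_sum_det (d k : ℕ) (hk : 1 ≤ k) (hkd : k ≤ d) :
    (Nat.card {l : List ℕ // l.Perm (List.range (d + k)) ∧ IsMinimal d l} : ℚ) =
      ∑ a ∈ (Finset.Nat.antidiagonalTuple k (d + k)).filter (fun a => ∀ i, 2 ≤ a i),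
        ((d + k).factorial : ℚ) * (Amat a).det := by
  classical
  set F := (Finset.Nat.antidiagonalTuple k (d + k)).filter (fun a => ∀ i, 2 ≤ a i) with hF
  have hFm : ∀ a, a ∈ F ↔ (∑ i, a i = d + k ∧ ∀ i, 2 ≤ a i) := by
    intro a; rw [hF, Finset.mem_filter, Finset.Nat.mem_antidiagonalTuple]
  have hex : ∀ a : Fin k → ℕ, ∃ S : Finset (Fin k → List ℕ), a ∈ F →
      (∀ A, A ∈ S ↔ PF (d + k) (fun i => muOf a i + a i) (muOf a) A) ∧
      (S.card : ℚ) = (d + k).factorial * (Amat a).det := by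
    intro a
    by_cases h : a ∈ F
    · obtain ⟨hs, ha⟩ := (hFm a).1 h
      obtain ⟨S, hS⟩ := PF_count (muOf a) (muOf_anti a ha) (d + k) (fun i => muOf a i + a i)
        (laOf_anti a ha) (fun c => by simp) (by simp [← Nat.cast_sum, hs])
      exact ⟨S, fun _ => by rw [Amat_det a ha]; exact hS⟩
    · exact ⟨∅, fun h' => absurd h' h⟩
  choose S hS using hex
  let T := F.sigma S
  let Φ : ((_ : Fin k → ℕ) × (Fin k → List ℕ)) → List ℕ := fun p => (chunks p.2).flatten
  have hT : ∀ p, p ∈ T → (∀ i, 2 ≤ p.1 i) ∧ (∀ i, (p.2 i).length = p.1 i) ∧ GoodCs (chunks p.2) ∧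
      (chunks p.2).flatten.Perm (List.range (d + k)) := by
    rintro ⟨a, A⟩ hp
    rw [Finset.mem_sigma] at hp
    have ha := ((hFm a).1 hp.1).2
    exact ⟨ha, (PF_iff _ a ha A).1 (((hS a hp.1).1 A).1 hp.2)⟩
  have hmem : ∀ l : List ℕ, (l.Perm (List.range (d + k)) ∧ IsMinimal d l) ↔ l ∈ T.image Φ := by
    intro l
    rw [Finset.mem_image]
    constructor
    · rintro ⟨hp, hm⟩
      have hn : l.Nodup := hp.nodup_iff.2 List.nodup_range
      rw [isMinimal_iff d (by omega) l hn] at hm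
      obtain ⟨hd, hT, y, x, t, rfl, hlt⟩ := hm
      obtain ⟨c, cs, hg, hf⟩ := exists_cs _ y x t le_rfl hlt hT
      have h3 := (GoodCs.spec cs _ hg).2.2
      generalize ((y :: x :: c) :: cs) = L at hg hf h3
      have hlen : L.length = k := by
        have := hp.length_eq
        rw [hf, this, hd, List.length_range] at h3
        omega
      let A : Fin k → List ℕ := fun i => (L[(i : ℕ)]'(by rw [hlen]; exact i.2)).reverse
      have hA : chunks A = L := by
        apply List.ext_getElem
        · simp [chunks, hlen]
        · intro i h1 h2
          simp [chunks, A]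
      let a : Fin k → ℕ := fun i => (A i).length
      have ha : ∀ i, 2 ≤ a i := by
        intro i
        have := (hg.1 _ (List.getElem_mem (show (i : ℕ) < L.length by rw [hlen]; exact i.2))).1
        simpa [a, A] using this
      have hPF := (PF_iff (d + k) a ha A).2 ⟨fun _ => rfl, by rw [hA]; exact hg, by rw [hA, hf]; exact hp⟩
      have haF : a ∈ F := by
        rw [hFm]
        refine ⟨?_, ha⟩
        have := congrArg Multiset.card hPF.ms
        rw [Multiset.card_sum, Multiset.card_range] at this
        simpa [a] using this
      refine ⟨⟨a, A⟩, Finset.mem_sigma.2 ⟨haF, ((hS a haF).1 A).2 hPF⟩, ?_⟩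
      simp only [Φ, hA, hf]
    · rintro ⟨⟨a, A⟩, hp, rfl⟩
      obtain ⟨ha, hlen, hg, hperm⟩ := hT _ hp
      simp only [Φ] at *
      refine ⟨hperm, ?_⟩
      have hn := hperm.nodup_iff.2 List.nodup_range
      rw [isMinimal_iff d (by omega) _ hn]
      have hl : (chunks A).length = k := by simp [chunks]
      have hl2 := hperm.length_eq
      rw [List.length_range] at hl2
      generalize chunks A = L at *
      match L, hg, hl, hl2 with
      | [], _, hl, _ => simp at hl; omega
      | c :: cs, hg, hl, hl2 =>
        obtain ⟨h1, h2, h3⟩ := GoodCs.spec cs c hg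
        exact ⟨by omega, h1, h2⟩
  have hinj : Set.InjOn Φ T := by
    rintro ⟨a, A⟩ hp ⟨b, B⟩ hq e
    obtain ⟨-, hla, hga, -⟩ := hT _ hp
    obtain ⟨-, hlb, hgb, -⟩ := hT _ hq
    have hAB : A = B := chunks_inj (GoodCs.inj hga hgb e)
    subst hAB
    have : a = b := funext fun i => (hla i).symm.trans (hlb i)
    subst this
    rfl
  rw [Nat.card_congr (Equiv.subtypeEquivRight hmem), Nat.card_eq_fintype_card, Fintype.card_coe,
    Finset.card_image_of_injOn hinj, Finset.card_sigma]
  push_cast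
  exact Finset.sum_congr rfl fun a ha => (hS a ha).2
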